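/- arXiv:2008.13513 — 7 statements merged into one kernel-verified Lean document; each statement's English description precedes it below -/
import Mathlib

section
/- Suppose Λ > 0, a ≠ 0, and e, M are real numbers such that the quartic Δ_r(x) = (x²+a²)(1−(Λ/3)x²) − 2Mx + e² has four distinct real roots r_n < 0 < r_- < r_+ < r_c (subextremal Kerr–Newman–de Sitter). Set α = r_+/r_-. Then Λe² < E(α), E(α) < 1/4, and 0 < Λa² < l(α, Λe²). -/
/-- The function `l(α, γ)` bounding `Λ a²` for subextremal KNdS spacetimes. -/
noncomputable def KNdS.l (α γ : ℝ) : ℝ :=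
  (3 / (2 * α ^ 2 * (1 + 2 * α))) *
    ((1 + 4 * α + 12 * α ^ 2 + 16 * α ^ 3 + 9 * α ^ 4) -
      (1 + 2 * α + 3 * α ^ 2) *
        Real.sqrt ((1 + α) ^ 2 * (1 + 2 * α + 9 * α ^ 2) + (4 * γ / 3) * α ^ 2 * (1 + 2 * α)))

/-- The function `E(α)` bounding `Λ e²` for subextremal KNdS spacetimes. -/
noncomputable def KNdS.E (α : ℝ) : ℝ :=
  3 * α ^ 2 * (1 + 2 * α) / (1 + 2 * α + 3 * α ^ 2) ^ 2

/-!
Vieta's formulas (the cubic coefficient vanishes, so `r_n = -(r_- + r_+ + r_c)`) express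
`Λ(a² + e²) / (1 - Λa²/3)²` through the ratios of `r_-`, `r_+`, `r_c` alone. For fixed
`r_- < r_+` this quantity is strictly decreasing in `r_c ≥ r_+`, and its value at the extremal
configuration `r_c = r_+` is `E(r_+/r_-)`. Hence `x = Λa²` and `γ = Λe²` satisfy
`x + γ < E(α)(1 - x/3)²`. For `x < 3` this quadratic inequality says precisely `x < l(α, γ)`,
and its instance `x = 0` turns `0 < l(α, γ)` into `γ < E(α)`.
-/

theorem quartic_coeffs_of_factorization {K : Type*} [Field K] [CharZero K]
    {c₄ c₃ c₂ c₁ c₀ p q r s : K}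
    (h : ∀ x, c₄ * x ^ 4 + c₃ * x ^ 3 + c₂ * x ^ 2 + c₁ * x + c₀ =
      c₄ * (x - p) * (x - q) * (x - r) * (x - s)) :
    c₃ = -c₄ * (p + q + r + s) ∧
      c₂ = c₄ * (p * q + p * r + p * s + q * r + q * s + r * s) ∧
      c₁ = -c₄ * (p * q * r + p * q * s + p * r * s + q * r * s) ∧
      c₀ = c₄ * (p * q * r * s) := by
  -- Finite differences of the values at `0`, `±1`, `±2` isolate the coefficients.
  refine ⟨?_, ?_, ?_, ?_⟩
  · linear_combination (h 2 - h (-2) - 2 * h 1 + 2 * h (-1)) / 12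
  · linear_combination (h 1 + h (-1)) / 2 - h 0
  · linear_combination (8 * h 1 - 8 * h (-1) - h 2 + h (-2)) / 12
  · linear_combination h 0

theorem quadratic_pos_iff_lt_smaller_root {a b c x : ℝ} (ha : 0 < a) (hx : 2 * a * x + b < 0) :
    0 < a * x ^ 2 + b * x + c ↔ x < (-b - √(discrim a b c)) / (2 * a) := by
  have complete_square :
      discrim a b c = (-(2 * a * x + b)) ^ 2 - 4 * a * (a * x ^ 2 + b * x + c) := by
    unfold discrim
    ring
  calc 0 < a * x ^ 2 + b * x + c
      ↔ discrim a b c < (-(2 * a * x + b)) ^ 2 := by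
        rw [complete_square, sub_lt_self_iff, mul_pos_iff_of_pos_left (by positivity)]
    _ ↔ √(discrim a b c) < -(2 * a * x + b) := (Real.sqrt_lt' (neg_pos.2 hx)).symm
    _ ↔ x < (-b - √(discrim a b c)) / (2 * a) := by
        rw [lt_div_iff₀ (by positivity)]
        constructor <;> intro h <;> linarith

theorem strictAntiOn_div_add_sq {K : Type*} [Field K] [LinearOrder K] [IsStrictOrderedRing K]
    {c : K} (hc : 0 < c) :
    StrictAntiOn (fun t ↦ t / (c + t) ^ 2) (Set.Ici c) := by
  intro t (ht : c ≤ t) u _ htu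
  have ht₀ : 0 < t := hc.trans_le ht
  have hu₀ : 0 < u := ht₀.trans htu
  have hprod : c * c < t * u := mul_lt_mul' ht (ht.trans_lt htu) hc.le ht₀
  have hgap : 0 < (u - t) * (t * u - c * c) := mul_pos (sub_pos.2 htu) (sub_pos.2 hprod)
  change u / (c + u) ^ 2 < t / (c + t) ^ 2
  rw [div_lt_div_iff₀ (by positivity) (by positivity)]
  linear_combination hgap

namespace KNdS

theorem E_pos {α : ℝ} (hα : 0 < α) : 0 < E α := by
  unfold E
  positivity

theorem E_lt_one_fourth {α : ℝ} (hα : 0 < α) (hα₁ : α ≠ 1) : E α < 1 / 4 := by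
  have hsq : 0 < ((α - 1) * (3 * α + 1)) ^ 2 :=
    sq_pos_of_ne_zero (mul_ne_zero (sub_ne_zero.2 hα₁) (by positivity))
  unfold E
  rw [div_lt_iff₀ (by positivity)]
  linear_combination hsq / 4

-- The quadratic in question is `E(α)(3 - x)² - 9(x + γ)`.
theorem l_eq_smaller_root {α : ℝ} (hα : 0 < α) (γ : ℝ) :
    l α γ = (-(-(9 + 6 * E α)) - √(discrim (E α) (-(9 + 6 * E α)) (9 * (E α - γ)))) /
      (2 * E α) := by
  have hdiscrim : discrim (E α) (-(9 + 6 * E α)) (9 * (E α - γ)) =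
      (9 / (1 + 2 * α + 3 * α ^ 2)) ^ 2 *
        ((1 + α) ^ 2 * (1 + 2 * α + 9 * α ^ 2) + 4 * γ / 3 * α ^ 2 * (1 + 2 * α)) := by
    unfold discrim E
    field_simp
    ring
  rw [hdiscrim, Real.sqrt_mul (sq_nonneg _), Real.sqrt_sq (by positivity)]
  unfold l E
  field_simp
  ring

theorem lt_l_iff {α γ x : ℝ} (hα : 0 < α) (hx : x ≤ 3) :
    x < l α γ ↔ x + γ < E α * (1 - x / 3) ^ 2 := by
  have hE := E_pos hα
  have left_of_vertex : 2 * E α * x + -(9 + 6 * E α) < 0 := by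
    linarith [mul_le_mul_of_nonneg_left hx hE.le]
  rw [l_eq_smaller_root hα, ← quadratic_pos_iff_lt_smaller_root hE left_of_vertex]
  constructor <;> intro h <;> linarith

theorem l_pos_iff {α γ : ℝ} (hα : 0 < α) : 0 < l α γ ↔ γ < E α := by
  simpa using lt_l_iff (γ := γ) hα zero_le_three

/-- The value of `Λ(a² + e²) / (1 - Λa²/3)²` for a Kerr–Newman–de Sitter spacetime with positive
horizon radii `r < s < t`. It is a function of the radii alone, which makes sense also at the
extremal limit `t = s`. -/
noncomputable def horizonRatio (r s t : ℝ) : ℝ :=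
  3 * r * s * (t * (r + s + t) / (r ^ 2 + r * s + s ^ 2 + t * (r + s + t)) ^ 2)

theorem horizonRatio_self {r s : ℝ} (hr : 0 < r) (hs : 0 < s) :
    horizonRatio r s s = E (s / r) := by
  unfold horizonRatio E
  field_simp
  ring

theorem horizonRatio_strictAntiOn {r s : ℝ} (hr : 0 < r) (hrs : r ≤ s) :
    StrictAntiOn (horizonRatio r s) (Set.Ici s) := by
  have hs : 0 < s := hr.trans_le hrs
  have hmono : StrictMonoOn (fun t ↦ t * (r + s + t)) (Set.Ici s) := by
    intro t (ht : s ≤ t) u _ htu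
    have ht₀ : 0 < t := hs.trans_le ht
    change t * (r + s + t) < u * (r + s + u)
    gcongr
  have hmaps : Set.MapsTo (fun t ↦ t * (r + s + t)) (Set.Ici s)
      (Set.Ici (r ^ 2 + r * s + s ^ 2)) := by
    intro t (ht : s ≤ t)
    calc r ^ 2 + r * s + s ^ 2 ≤ s ^ 2 + r * s + s ^ 2 := by gcongr
      _ = s * (r + s + s) := by ring
      _ ≤ t * (r + s + t) := by gcongr; exact hs.le.trans ht
  intro t ht u hu htu
  exact mul_lt_mul_of_pos_left
    ((strictAntiOn_div_add_sq (by positivity)).comp_strictMonoOn hmono hmaps ht hu htu)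
    (by positivity)

theorem horizonRatio_lt_E {r s t : ℝ} (hr : 0 < r) (hrs : r ≤ s) (hst : s < t) :
    horizonRatio r s t < E (s / r) := by
  rw [← horizonRatio_self hr (hr.trans_le hrs)]
  exact horizonRatio_strictAntiOn hr hrs Set.self_mem_Ici hst.le hst

theorem parameters_eq_of_factorization {Λ a e M rn rm rp rc : ℝ} (hΛ : Λ ≠ 0)
    (hroots : ∀ x : ℝ,
      (x ^ 2 + a ^ 2) * (1 - (Λ / 3) * x ^ 2) - 2 * M * x + e ^ 2 =
        -(Λ / 3) * (x - rn) * (x - rm) * (x - rp) * (x - rc)) :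
    1 - Λ * a ^ 2 / 3 = Λ / 3 * (rm ^ 2 + rm * rp + rp ^ 2 + rc * (rm + rp + rc)) ∧
      a ^ 2 + e ^ 2 = Λ / 3 * (rm * rp * (rc * (rm + rp + rc))) := by
  obtain ⟨hcubic, hquadratic, -, hconst⟩ := quartic_coeffs_of_factorization
    (c₄ := -(Λ / 3)) (c₃ := 0) (c₂ := 1 - Λ * a ^ 2 / 3) (c₁ := -2 * M) (c₀ := a ^ 2 + e ^ 2)
    (p := rn) (q := rm) (r := rp) (s := rc) fun x ↦ by linear_combination hroots x
  have hsum : rn + rm + rp + rc = 0 := by simpa [hΛ] using hcubic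
  obtain rfl : rn = -(rm + rp + rc) := by linear_combination hsum
  exact ⟨by linear_combination hquadratic, by linear_combination hconst⟩

theorem mul_sq_add_sq_eq_horizonRatio_mul {Λ a e rm rp rc : ℝ}
    (hm : 0 < rm) (hp : 0 < rp) (hc : 0 < rc)
    (hquadratic : 1 - Λ * a ^ 2 / 3 =
      Λ / 3 * (rm ^ 2 + rm * rp + rp ^ 2 + rc * (rm + rp + rc)))
    (hconst : a ^ 2 + e ^ 2 = Λ / 3 * (rm * rp * (rc * (rm + rp + rc)))) :
    Λ * a ^ 2 + Λ * e ^ 2 = horizonRatio rm rp rc * (1 - Λ * a ^ 2 / 3) ^ 2 := by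
  rw [← mul_add, hquadratic, hconst, horizonRatio]
  field_simp

end KNdS

theorem subextremal_KNdS_parameter_bounds
    (Λ a e M rn rm rp rc : ℝ)
    (hΛ : 0 < Λ) (ha : a ≠ 0)
    (hrn : rn < 0) (h0 : 0 < rm) (hmp : rm < rp) (hpc : rp < rc)
    (hroots : ∀ x : ℝ,
      (x ^ 2 + a ^ 2) * (1 - (Λ / 3) * x ^ 2) - 2 * M * x + e ^ 2 =
        -(Λ / 3) * (x - rn) * (x - rm) * (x - rp) * (x - rc))
    (α : ℝ) (hα : α = rp / rm) :
    Λ * e ^ 2 < KNdS.E α ∧ KNdS.E α < 1 / 4 ∧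
      0 < Λ * a ^ 2 ∧ Λ * a ^ 2 < KNdS.l α (Λ * e ^ 2) := by
  have hp : 0 < rp := h0.trans hmp
  have hc : 0 < rc := hp.trans hpc
  have hα₁ : 1 < α := hα ▸ (one_lt_div h0).2 hmp
  have hα₀ : 0 < α := one_pos.trans hα₁
  obtain ⟨hquadratic, hconst⟩ := KNdS.parameters_eq_of_factorization hΛ.ne' hroots
  have hpos : 0 < 1 - Λ * a ^ 2 / 3 := by
    rw [hquadratic]
    positivity
  have key : Λ * a ^ 2 + Λ * e ^ 2 < KNdS.E α * (1 - Λ * a ^ 2 / 3) ^ 2 := by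
    rw [KNdS.mul_sq_add_sq_eq_horizonRatio_mul h0 hp hc hquadratic hconst, hα]
    gcongr
    exact KNdS.horizonRatio_lt_E h0 hmp.le hpc
  have ha_pos : 0 < Λ * a ^ 2 := by positivity
  have ha_lt : Λ * a ^ 2 < KNdS.l α (Λ * e ^ 2) := (KNdS.lt_l_iff hα₀ (by linarith)).2 key
  exact ⟨(KNdS.l_pos_iff hα₀).1 (ha_pos.trans ha_lt), KNdS.E_lt_one_fourth hα₀ hα₁.ne',
    ha_pos, ha_lt⟩
end

section
/- Suppose Λ > 0, a ≠ 0, and e, M are real numbers such that Δ_r(x) = (x²+a²)(1−(Λ/3)x²) − 2Mx + e² has four distinct real roots r_n < 0 < r_- < r_+ < r_c. Then, with b = r_-² + r_+² + r_- r_+, the quantity (1 − Λa²/3)² − 4Λ(a²+e²)b/(3 r_- r_+) is nonnegative and Λ = [ (3 − Λa²) − 3·√( (1 − Λa²/3)² − 4Λ(a²+e²)b/(3 r_- r_+) ) ] / (2b); that is, Λ is the smaller of the two roots of the quadratic equation (b/3)X² − (1 − Λa²/3)X + Λ(a²+e²)/(r_- r_+) = 0. -/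
/-!
As `Δ_r` has no cubic term, its roots `rn, rm, rp, rc` sum to zero. Vieta's formulas for its
quadratic and constant coefficients then say that the quadratic equation
`(b/3) X² - (1 - Λa²/3) X + Λ(a² + e²)/(rm rp) = 0` has the two roots `Λ` and `-Λ rn rc / b`, and
`Λ` is the smaller one because `b ≤ rc (rm + rp + rc) = -rn rc` when `rc` is the largest root.
-/

section Quartic

variable {R : Type*} [CommRing R] [IsDomain R] [Infinite R]

open Polynomial in
theorem quartic_coeffs_eq {a₄ a₃ a₂ a₁ a₀ b₄ b₃ b₂ b₁ b₀ : R}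
    (h : ∀ x : R, a₄ * x ^ 4 + a₃ * x ^ 3 + a₂ * x ^ 2 + a₁ * x + a₀ =
      b₄ * x ^ 4 + b₃ * x ^ 3 + b₂ * x ^ 2 + b₁ * x + b₀) :
    a₄ = b₄ ∧ a₃ = b₃ ∧ a₂ = b₂ ∧ a₁ = b₁ ∧ a₀ = b₀ := by
  have hpoly : C a₄ * X ^ 4 + C a₃ * X ^ 3 + C a₂ * X ^ 2 + C a₁ * X + C a₀ =
      C b₄ * X ^ 4 + C b₃ * X ^ 3 + C b₂ * X ^ 2 + C b₁ * X + C b₀ :=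
    Polynomial.funext fun x ↦ by simpa using h x
  have hcoeff (n : ℕ) := congrArg (coeff · n) hpoly
  refine ⟨?_, ?_, ?_, ?_, ?_⟩
  · simpa [coeff_X, coeff_C] using hcoeff 4
  · simpa [coeff_X, coeff_C] using hcoeff 3
  · simpa [coeff_X, coeff_C] using hcoeff 2
  · simpa [coeff_X, coeff_C] using hcoeff 1
  · simpa [coeff_X, coeff_C] using hcoeff 0

theorem quartic_vieta {c₄ c₃ c₂ c₁ c₀ k r₁ r₂ r₃ r₄ : R}
    (h : ∀ x : R, c₄ * x ^ 4 + c₃ * x ^ 3 + c₂ * x ^ 2 + c₁ * x + c₀ =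
      k * (x - r₁) * (x - r₂) * (x - r₃) * (x - r₄)) :
    c₄ = k ∧
      c₃ = -k * (r₁ + r₂ + r₃ + r₄) ∧
      c₂ = k * (r₁ * r₂ + r₁ * r₃ + r₁ * r₄ + r₂ * r₃ + r₂ * r₄ + r₃ * r₄) ∧
      c₁ = -k * (r₁ * r₂ * r₃ + r₁ * r₂ * r₄ + r₁ * r₃ * r₄ + r₂ * r₃ * r₄) ∧
      c₀ = k * (r₁ * r₂ * r₃ * r₄) :=
  quartic_coeffs_eq fun x ↦ (h x).trans (by ring)

end Quartic

theorem eq_neg_sub_sqrt_discrim_div {a b c x : ℝ} (ha : a ≠ 0)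
    (hx : a * (x * x) + b * x + c = 0) (hvertex : 2 * a * x + b ≤ 0) :
    x = (-b - √(discrim a b c)) / (2 * a) := by
  rw [discrim_eq_sq_of_quadratic_eq_zero hx, Real.sqrt_sq_eq_abs, abs_of_nonpos hvertex]
  field

theorem sq_add_sq_add_mul_le {R : Type*} [CommSemiring R] [PartialOrder R] [IsOrderedRing R]
    {x y z : R} (hx : 0 ≤ x) (hy : 0 ≤ y) (hxz : x ≤ z) (hyz : y ≤ z) :
    x ^ 2 + y ^ 2 + x * y ≤ (x + y + z) * z := by
  have hz : 0 ≤ z := hx.trans hxz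
  calc x ^ 2 + y ^ 2 + x * y = x * x + y * y + x * y := by ring
    _ ≤ z * x + z * y + z * z := by gcongr
    _ = (x + y + z) * z := by ring

/-- The radial function `Δ_r` of the Kerr–Newman–de Sitter metric. The parameters `α` and `q` stand
for `a²` and `e²` and may take any real value. -/
noncomputable def radialDelta (Λ α q M x : ℝ) : ℝ :=
  (x ^ 2 + α) * (1 - (Λ / 3) * x ^ 2) - 2 * M * x + q

section Horizons

variable {Λ α q M rn rm rp rc : ℝ}

theorem radialDelta_vieta
    (hroots : ∀ x, radialDelta Λ α q M x =
      -(Λ / 3) * (x - rn) * (x - rm) * (x - rp) * (x - rc)) :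
    Λ / 3 * (rn + rm + rp + rc) = 0 ∧
      1 - Λ * α / 3 =
        -(Λ / 3) * (rn * rm + rn * rp + rn * rc + rm * rp + rm * rc + rp * rc) ∧
      α + q = -(Λ / 3) * (rn * rm * rp * rc) := by
  have hcoeffs (x : ℝ) :
      -(Λ / 3) * x ^ 4 + 0 * x ^ 3 + (1 - Λ * α / 3) * x ^ 2 + -(2 * M) * x + (α + q) =
        -(Λ / 3) * (x - rn) * (x - rm) * (x - rp) * (x - rc) := by
    rw [← hroots x, radialDelta]
    ring
  obtain ⟨-, hcubic, hquadratic, -, hconst⟩ := quartic_vieta hcoeffs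
  exact ⟨by rwa [neg_neg, eq_comm] at hcubic, hquadratic, hconst⟩

theorem radialDelta_roots_sum_eq_zero (hΛ : Λ ≠ 0)
    (hroots : ∀ x, radialDelta Λ α q M x =
      -(Λ / 3) * (x - rn) * (x - rm) * (x - rp) * (x - rc)) :
    rn + rm + rp + rc = 0 :=
  (mul_eq_zero.mp (radialDelta_vieta hroots).1).resolve_left (by positivity)

theorem radialDelta_quadratic_coeff
    (hroots : ∀ x, radialDelta Λ α q M x =
      -(Λ / 3) * (x - rn) * (x - rm) * (x - rp) * (x - rc)) :
    1 - Λ * α / 3 = Λ / 3 * (rm ^ 2 + rp ^ 2 + rm * rp - rn * rc) := by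
  linear_combination (radialDelta_vieta hroots).2.1 -
    (rm + rp) * (radialDelta_vieta hroots).1

theorem cosmological_constant_quadratic_eq_zero (hrm : rm ≠ 0) (hrp : rp ≠ 0)
    (hroots : ∀ x, radialDelta Λ α q M x =
      -(Λ / 3) * (x - rn) * (x - rm) * (x - rp) * (x - rc)) :
    (rm ^ 2 + rp ^ 2 + rm * rp) / 3 * (Λ * Λ) + -(1 - Λ * α / 3) * Λ +
      Λ * (α + q) / (rm * rp) = 0 := by
  rw [radialDelta_quadratic_coeff hroots, (radialDelta_vieta hroots).2.2]
  field

theorem cosmological_constant_left_of_vertex (hΛ : 0 < Λ) (hrm : 0 ≤ rm) (hrp : 0 ≤ rp)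
    (hmc : rm ≤ rc) (hpc : rp ≤ rc)
    (hroots : ∀ x, radialDelta Λ α q M x =
      -(Λ / 3) * (x - rn) * (x - rm) * (x - rp) * (x - rc)) :
    2 * ((rm ^ 2 + rp ^ 2 + rm * rp) / 3) * Λ + -(1 - Λ * α / 3) ≤ 0 := by
  have hrn : rn = -(rm + rp + rc) := by
    linear_combination radialDelta_roots_sum_eq_zero hΛ.ne' hroots
  have hle : rm ^ 2 + rp ^ 2 + rm * rp ≤ -rn * rc := by
    rw [hrn, neg_neg]
    exact sq_add_sq_add_mul_le hrm hrp hmc hpc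
  rw [radialDelta_quadratic_coeff hroots]
  linear_combination Λ / 3 * hle

end Horizons

theorem subextremal_KNdS_Lambda_formula_general
    {Λ α q M rn rm rp rc : ℝ}
    (hΛ : 0 < Λ) (hrm : 0 < rm) (hrp : 0 < rp) (hmc : rm ≤ rc) (hpc : rp ≤ rc)
    (hroots : ∀ x, radialDelta Λ α q M x =
      -(Λ / 3) * (x - rn) * (x - rm) * (x - rp) * (x - rc))
    {b : ℝ} (hb : b = rm ^ 2 + rp ^ 2 + rm * rp) :
    0 ≤ (1 - Λ * α / 3) ^ 2 - 4 * Λ * (α + q) * b / (3 * rm * rp) ∧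
      Λ = ((3 - Λ * α) -
            3 * √((1 - Λ * α / 3) ^ 2 - 4 * Λ * (α + q) * b / (3 * rm * rp))) / (2 * b) := by
  have hb_pos : 0 < b := by rw [hb]; positivity
  have hquadratic := cosmological_constant_quadratic_eq_zero hrm.ne' hrp.ne' hroots
  have hvertex := cosmological_constant_left_of_vertex hΛ hrm.le hrp.le hmc hpc hroots
  rw [← hb] at hquadratic hvertex
  have hdiscrim : (1 - Λ * α / 3) ^ 2 - 4 * Λ * (α + q) * b / (3 * rm * rp) =
      discrim (b / 3) (-(1 - Λ * α / 3)) (Λ * (α + q) / (rm * rp)) := by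
    rw [discrim]
    field
  rw [hdiscrim]
  constructor
  · rw [discrim_eq_sq_of_quadratic_eq_zero hquadratic]
    positivity
  · refine (eq_neg_sub_sqrt_discrim_div (by positivity) hquadratic hvertex).trans ?_
    field

theorem subextremal_KNdS_Lambda_formula
    (Λ a e M rn rm rp rc : ℝ)
    (hΛ : 0 < Λ) (ha : a ≠ 0)
    (hrn : rn < 0) (h0 : 0 < rm) (hmp : rm < rp) (hpc : rp < rc)
    (hroots : ∀ x : ℝ,
      (x ^ 2 + a ^ 2) * (1 - (Λ / 3) * x ^ 2) - 2 * M * x + e ^ 2 =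
        -(Λ / 3) * (x - rn) * (x - rm) * (x - rp) * (x - rc))
    (b : ℝ) (hb : b = rm ^ 2 + rp ^ 2 + rm * rp) :
    0 ≤ (1 - Λ * a ^ 2 / 3) ^ 2 - 4 * Λ * (a ^ 2 + e ^ 2) * b / (3 * rm * rp) ∧
      Λ = ((3 - Λ * a ^ 2) -
            3 * Real.sqrt ((1 - Λ * a ^ 2 / 3) ^ 2 -
              4 * Λ * (a ^ 2 + e ^ 2) * b / (3 * rm * rp))) / (2 * b) :=
  subextremal_KNdS_Lambda_formula_general hΛ h0 (h0.trans hmp) (hmp.trans hpc).le hpc.le hroots hb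
end

section
/- For every γ with 0 < γ < 1/4, define Γ(γ) = [ 1 − 2γ + √(1−4γ) + √2·√( 1 − γ − 4γ² + (1+γ)·√(1−4γ) ) ] / (6γ). Then Γ(γ) > 1 and 3·Γ(γ)²·(1+2Γ(γ)) / (1 + 2Γ(γ) + 3Γ(γ)²)² = γ; that is, Γ(γ) is a solution greater than one of the equation E(α) = γ. -/
/-- The inverse `Γ(γ)` of the function `E(α) = 3α²(1+2α)/(1+2α+3α²)²`. -/
noncomputable def KNdS.Gamma (γ : ℝ) : ℝ :=
  (1 - 2 * γ + Real.sqrt (1 - 4 * γ) +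
    Real.sqrt 2 *
      Real.sqrt (1 - γ - 4 * γ ^ 2 + (1 + γ) * Real.sqrt (1 - 4 * γ))) / (6 * γ)

/-!
In the variable `w = 3α² / (1 + 2α)` the function `E` becomes `w / (1 + w)²`, so `E(α) = γ` is a
tower of two quadratic equations: `γ (1 + w)² = w` for `w`, then `3α² = w (1 + 2α)` for `α`. Taking
the larger root both times gives `Γ(γ)`, and both roots exceed `1` when `0 < γ < 1/4`.
-/

namespace KNdS

/-- The function `E` of the paper, whose inverse is `Γ`. -/
noncomputable def E_s9 (α : ℝ) : ℝ :=
  3 * α ^ 2 * (1 + 2 * α) / (1 + 2 * α + 3 * α ^ 2) ^ 2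

/-- The larger root `w` of `γ (1 + w)² = w`, for `0 < γ ≤ 1/4`; it is the ratio
`3α² / (1 + 2α)` at `α = Γ(γ)`. -/
noncomputable def ratioOfGamma (γ : ℝ) : ℝ :=
  (1 - 2 * γ + √(1 - 4 * γ)) / (2 * γ)

/-- The larger root `α` of `3α² = w (1 + 2α)`, recovering `α` from the ratio
`w = 3α² / (1 + 2α)`. -/
noncomputable def alphaOfRatio (w : ℝ) : ℝ :=
  (w + √(w ^ 2 + 3 * w)) / 3

variable {α w γ : ℝ}

theorem E_eq_div_one_add_sq (h : 3 * α ^ 2 = w * (1 + 2 * α)) : E_s9 α = w / (1 + w) ^ 2 := by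
  have hα : 1 + 2 * α ≠ 0 := by
    intro h0
    have hα0 : α = 0 := by simpa [h0] using h
    simp [hα0] at h0
  calc
    E_s9 α = (1 + 2 * α) ^ 2 * w / ((1 + 2 * α) ^ 2 * (1 + w) ^ 2) := by
      rw [E_s9, h]
      congr 1 <;> ring
    _ = w / (1 + w) ^ 2 := mul_div_mul_left _ _ (pow_ne_zero 2 hα)

theorem three_mul_alphaOfRatio_sq (hw : 0 ≤ w ^ 2 + 3 * w) :
    3 * alphaOfRatio w ^ 2 = w * (1 + 2 * alphaOfRatio w) := by
  rw [alphaOfRatio]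
  linear_combination Real.sq_sqrt hw / 3

theorem E_alphaOfRatio (hw : 0 ≤ w ^ 2 + 3 * w) : E_s9 (alphaOfRatio w) = w / (1 + w) ^ 2 :=
  E_eq_div_one_add_sq (three_mul_alphaOfRatio_sq hw)

theorem one_lt_alphaOfRatio (hw : 1 < w) : 1 < alphaOfRatio w := by
  have hsqrt : 2 < √(w ^ 2 + 3 * w) := Real.lt_sqrt_of_sq_lt (by nlinarith)
  rw [alphaOfRatio]
  linarith

theorem ratioOfGamma_div_one_add_sq (hγ₀ : γ ≠ 0) (hγ : γ ≤ 1 / 4) :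
    ratioOfGamma γ / (1 + ratioOfGamma γ) ^ 2 = γ := by
  have hs : √(1 - 4 * γ) ^ 2 = 1 - 4 * γ := Real.sq_sqrt (by linarith)
  have hs₀ : 1 + √(1 - 4 * γ) ≠ 0 := by positivity
  have hratio : ratioOfGamma γ = (1 + √(1 - 4 * γ)) ^ 2 / (4 * γ) := by
    rw [ratioOfGamma, div_eq_div_iff (by positivity) (by positivity)]
    linear_combination -2 * γ * hs
  have hone_add : 1 + ratioOfGamma γ = (1 + √(1 - 4 * γ)) / (2 * γ) := by
    rw [ratioOfGamma]
    field_simp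
    ring
  rw [hone_add, hratio]
  field_simp
  ring

theorem one_lt_ratioOfGamma (hγ₀ : 0 < γ) (hγ : γ < 1 / 4) : 1 < ratioOfGamma γ := by
  rw [ratioOfGamma, one_lt_div (by positivity)]
  linarith [Real.sqrt_nonneg (1 - 4 * γ)]

theorem Gamma_eq_alphaOfRatio (hγ₀ : 0 < γ) (hγ : γ ≤ 1 / 4) :
    Gamma γ = alphaOfRatio (ratioOfGamma γ) := by
  have hs : √(1 - 4 * γ) ^ 2 = 1 - 4 * γ := Real.sq_sqrt (by linarith)
  have hnum : 1 - 2 * γ + √(1 - 4 * γ) = 2 * γ * ratioOfGamma γ := by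
    rw [ratioOfGamma, mul_div_cancel₀ _ (by positivity)]
  have hradicand : 2 * (1 - γ - 4 * γ ^ 2 + (1 + γ) * √(1 - 4 * γ)) =
      (2 * γ) ^ 2 * (ratioOfGamma γ ^ 2 + 3 * ratioOfGamma γ) :=
    calc
      2 * (1 - γ - 4 * γ ^ 2 + (1 + γ) * √(1 - 4 * γ))
        = (1 - 2 * γ + √(1 - 4 * γ)) ^ 2 + 6 * γ * (1 - 2 * γ + √(1 - 4 * γ)) := by
          linear_combination -hs
      _ = (2 * γ) ^ 2 * (ratioOfGamma γ ^ 2 + 3 * ratioOfGamma γ) := by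
          rw [hnum]
          ring
  have hsqrt : √2 * √(1 - γ - 4 * γ ^ 2 + (1 + γ) * √(1 - 4 * γ)) =
      2 * γ * √(ratioOfGamma γ ^ 2 + 3 * ratioOfGamma γ) := by
    rw [← Real.sqrt_mul zero_le_two, hradicand, Real.sqrt_mul (sq_nonneg _),
      Real.sqrt_sq (by positivity)]
  rw [Gamma, alphaOfRatio, hsqrt, hnum]
  field_simp
  ring

end KNdS

theorem KNdS_Gamma_inverts_E (γ : ℝ) (hγ0 : 0 < γ) (hγ1 : γ < 1 / 4) :
    KNdS.Gamma γ > 1 ∧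
      3 * (KNdS.Gamma γ) ^ 2 * (1 + 2 * KNdS.Gamma γ) /
        (1 + 2 * KNdS.Gamma γ + 3 * (KNdS.Gamma γ) ^ 2) ^ 2 = γ := by
  have hratio : 1 < KNdS.ratioOfGamma γ := KNdS.one_lt_ratioOfGamma hγ0 hγ1
  rw [KNdS.Gamma_eq_alphaOfRatio hγ0 hγ1.le]
  refine ⟨KNdS.one_lt_alphaOfRatio hratio, ?_⟩
  calc
    KNdS.E_s9 (KNdS.alphaOfRatio (KNdS.ratioOfGamma γ))
      = KNdS.ratioOfGamma γ / (1 + KNdS.ratioOfGamma γ) ^ 2 := KNdS.E_alphaOfRatio (by positivity)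
    _ = γ := KNdS.ratioOfGamma_div_one_add_sq hγ0.ne' hγ1.le
end

section
/- lim_{α → +∞} α · l(α, 0) = 2/3; equivalently, lim_{α → +∞} l(α,0) / (2/(3α)) = 1. -/
/-!
Put `q = 1 + 2 * α + 3 * α ^ 2` and `t = α ^ 2 * (1 + 2 * α) / q ^ 2`. The polynomial outside the
square root in `l α γ` is `q ^ 2 * (1 + 2 * t)` and the radicand is
`q ^ 2 * (1 + 4 / 3 * (γ + 3) * t)`, so `l` depends on `α` only through `t`. With
`s = √(1 + 4 / 3 * (γ + 3) * t)` rationalisation gives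
`l α γ + γ = 4 / 3 * (γ + 3) ^ 2 * t / (1 + s) ^ 2`. As `α → ∞`, `α * t → 2 / 9` and `s → 1`, whence
`α * (l α γ + γ) → 2 / 27 * (γ + 3) ^ 2`.
-/

open Filter Topology

namespace KNdS

/-- The combination of `α` through which `KNdS.l` depends on `α`; it serves as the small parameter
in the expansion of `KNdS.l` as `α → ∞`. -/
noncomputable def smallParam (α : ℝ) : ℝ :=
  α ^ 2 * (1 + 2 * α) / (1 + 2 * α + 3 * α ^ 2) ^ 2

/-- The square root that remains in `KNdS.l` once the factor `1 + 2 * α + 3 * α ^ 2` has been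
extracted. -/
noncomputable def reducedSqrt (α γ : ℝ) : ℝ :=
  √(1 + 4 / 3 * (γ + 3) * smallParam α)

lemma one_add_two_mul_add_three_mul_sq_pos (α : ℝ) : 0 < 1 + 2 * α + 3 * α ^ 2 := by
  nlinarith [sq_nonneg (1 + 3 * α)]

lemma smallParam_ne_zero {α : ℝ} (hα : α ≠ 0) (hα' : 1 + 2 * α ≠ 0) : smallParam α ≠ 0 :=
  div_ne_zero (mul_ne_zero (pow_ne_zero 2 hα) hα')
    (pow_ne_zero 2 (one_add_two_mul_add_three_mul_sq_pos α).ne')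

lemma sqrt_radicand_eq (α γ : ℝ) :
    √((1 + α) ^ 2 * (1 + 2 * α + 9 * α ^ 2) + (4 * γ / 3) * α ^ 2 * (1 + 2 * α)) =
      (1 + 2 * α + 3 * α ^ 2) * reducedSqrt α γ := by
  have hq := one_add_two_mul_add_three_mul_sq_pos α
  have hfactor : (1 + α) ^ 2 * (1 + 2 * α + 9 * α ^ 2) + (4 * γ / 3) * α ^ 2 * (1 + 2 * α) =
      (1 + 2 * α + 3 * α ^ 2) ^ 2 * (1 + 4 / 3 * (γ + 3) * smallParam α) := by
    have ht : (1 + 2 * α + 3 * α ^ 2) ^ 2 * smallParam α = α ^ 2 * (1 + 2 * α) :=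
      mul_div_cancel₀ _ (pow_ne_zero 2 hq.ne')
    linear_combination -(4 / 3 * (γ + 3)) * ht
  rw [hfactor, Real.sqrt_mul (sq_nonneg _), Real.sqrt_sq hq.le, reducedSqrt]

lemma l_eq {α : ℝ} (hα : α ≠ 0) (hα' : 1 + 2 * α ≠ 0) (γ : ℝ) :
    l α γ = 3 / (2 * smallParam α) * (1 + 2 * smallParam α - reducedSqrt α γ) := by
  have hq := (one_add_two_mul_add_three_mul_sq_pos α).ne'
  rw [l, sqrt_radicand_eq, smallParam]
  field_simp
  ring

lemma l_add_eq {α γ : ℝ} (hα : α ≠ 0) (hα' : 1 + 2 * α ≠ 0)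
    (hnonneg : 0 ≤ 1 + 4 / 3 * (γ + 3) * smallParam α) :
    l α γ + γ = 4 / 3 * (γ + 3) ^ 2 * smallParam α / (1 + reducedSqrt α γ) ^ 2 := by
  have ht := smallParam_ne_zero hα hα'
  have hsq : reducedSqrt α γ ^ 2 = 1 + 4 / 3 * (γ + 3) * smallParam α := Real.sq_sqrt hnonneg
  have hs : 1 + reducedSqrt α γ ≠ 0 := by
    have : 0 ≤ reducedSqrt α γ := Real.sqrt_nonneg _
    positivity
  rw [l_eq hα hα']
  generalize smallParam α = t at *
  generalize reducedSqrt α γ = s at *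
  have hγ : γ + 3 = 3 * (s ^ 2 - 1) / (4 * t) := by
    field_simp
    linear_combination -3 * hsq
  calc 3 / (2 * t) * (1 + 2 * t - s) + γ = (γ + 3) + 3 * (1 - s) / (2 * t) := by
        field_simp
        ring
    _ = 3 * (s - 1) ^ 2 / (4 * t) := by
        rw [hγ]
        field_simp
        ring
    _ = 4 / 3 * (γ + 3) ^ 2 * t / (1 + s) ^ 2 := by
        rw [hγ]
        field_simp
        ring

lemma tendsto_mul_smallParam_atTop :
    Tendsto (fun α ↦ α * smallParam α) atTop (𝓝 (2 / 9)) := by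
  have hcont : ContinuousAt (fun x : ℝ ↦ (x + 2) / (x ^ 2 + 2 * x + 3) ^ 2) 0 := by
    fun_prop (disch := norm_num)
  have hlim : Tendsto (fun x : ℝ ↦ (x + 2) / (x ^ 2 + 2 * x + 3) ^ 2) (𝓝 0) (𝓝 (2 / 9)) := by
    convert hcont.tendsto using 2
    norm_num
  refine (hlim.comp tendsto_inv_atTop_zero).congr' ?_
  filter_upwards [eventually_gt_atTop 0] with α hα
  simp only [Function.comp_apply, smallParam]
  field_simp

lemma tendsto_smallParam_atTop : Tendsto smallParam atTop (𝓝 0) := by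
  have h := tendsto_inv_atTop_zero.mul tendsto_mul_smallParam_atTop
  rw [zero_mul] at h
  refine h.congr' ?_
  filter_upwards [eventually_ne_atTop 0] with α hα
  exact inv_mul_cancel_left₀ hα _

lemma tendsto_reducedRadicand_atTop (γ : ℝ) :
    Tendsto (fun α ↦ 1 + 4 / 3 * (γ + 3) * smallParam α) atTop (𝓝 1) := by
  simpa only [mul_zero, add_zero] using
    (tendsto_smallParam_atTop.const_mul (4 / 3 * (γ + 3))).const_add 1

lemma tendsto_reducedSqrt_atTop (γ : ℝ) :
    Tendsto (fun α ↦ reducedSqrt α γ) atTop (𝓝 1) := by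
  simpa only [reducedSqrt, Real.sqrt_one] using (tendsto_reducedRadicand_atTop γ).sqrt

end KNdS

open KNdS in
theorem KNdS_l_asymptotics_general (γ : ℝ) :
    Tendsto (fun α ↦ α * (l α γ + γ)) atTop (𝓝 (2 / 27 * (γ + 3) ^ 2)) := by
  have hlim : Tendsto
      (fun α ↦ 4 / 3 * (γ + 3) ^ 2 * (α * smallParam α) / (1 + reducedSqrt α γ) ^ 2)
      atTop (𝓝 (4 / 3 * (γ + 3) ^ 2 * (2 / 9) / (1 + 1) ^ 2)) :=
    (tendsto_mul_smallParam_atTop.const_mul _).div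
      (((tendsto_reducedSqrt_atTop γ).const_add 1).pow 2) (by norm_num)
  have hvalue : 4 / 3 * (γ + 3) ^ 2 * (2 / 9) / (1 + 1) ^ 2 = 2 / 27 * (γ + 3) ^ 2 := by ring
  rw [hvalue] at hlim
  refine hlim.congr' ?_
  filter_upwards [eventually_gt_atTop 0,
    (tendsto_reducedRadicand_atTop γ).eventually_const_le one_pos] with α hα hnonneg
  rw [l_add_eq hα.ne' (by positivity) hnonneg]
  ring

theorem KNdS_l_asymptotics :
    Filter.Tendsto (fun α : ℝ => α * KNdS.l α 0) Filter.atTop (nhds (2 / 3)) := by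
  convert KNdS_l_asymptotics_general 0 using 2 <;> norm_num
end

section
/- For every α > 1, one has 1 + l(α,0)/3 < 1/sin²( arctan(√α) − arctan(1/√α) ); that is, the quotient ρ̂(α) = ( 1/sin²(arctan(√α) − arctan(1/√α)) − 1 ) / ( l(α,0)/3 ) is strictly greater than one for all α > 1. -/
/-!
As `l(α, γ)` decreases in `γ`, the case `γ = 0` implies the inequality for every `γ ≥ 0`.
Write `A = α² (1 + 2α)`, `P = 1 + 4α + 12α² + 16α³ + 9α⁴` and `l(α, 0) / 3 = (P - √D) / (2A)`.
The identity `P² - D = (2A)²` says that `l(α, 0) / 3` is the smaller of two mutually reciprocal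
roots of `A x² - P x + A`. Hence `l(α, 0) / 3 = 2A / (P + √D) < 2A / P`, a rational bound.
Since the angle is `2 arctan √α - π / 2`, its sine is `(α - 1) / (α + 1)`, so the cosecant squared
exceeds `1` by `4α / (α - 1)²`, which dominates `2A / P`.
-/

namespace KNdS

theorem sin_arctan_sub_arctan_inv {x : ℝ} (hx : 0 < x) :
    Real.sin (Real.arctan x - Real.arctan x⁻¹) = (x ^ 2 - 1) / (x ^ 2 + 1) := by
  have angle_eq : Real.arctan x - Real.arctan x⁻¹ = 2 * Real.arctan x - Real.pi / 2 := by
    rw [Real.arctan_inv_of_pos hx]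
    ring
  rw [angle_eq, Real.sin_sub_pi_div_two, Real.cos_two_mul, Real.cos_sq_arctan]
  field_simp
  ring

theorem one_div_sin_sq_arctan_sqrt_sub {α : ℝ} (hα : 0 < α) (hα₁ : α ≠ 1) :
    1 / Real.sin (Real.arctan (Real.sqrt α) - Real.arctan (1 / Real.sqrt α)) ^ 2 =
      1 + 4 * α / (α - 1) ^ 2 := by
  have hsub : α - 1 ≠ 0 := sub_ne_zero.mpr hα₁
  rw [one_div (Real.sqrt α), sin_arctan_sub_arctan_inv (Real.sqrt_pos.mpr hα),
    Real.sq_sqrt hα.le]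
  field_simp
  ring

theorem antitone_l {α : ℝ} (hα : 0 < α) : Antitone (l α) := by
  intro γ₁ γ₂ hγ
  unfold l
  gcongr

theorem l_zero_eq {α : ℝ} (hα : 0 < α) :
    l α 0 = 6 * α ^ 2 * (1 + 2 * α) /
      ((1 + 4 * α + 12 * α ^ 2 + 16 * α ^ 3 + 9 * α ^ 4) +
        (1 + 3 * α + 5 * α ^ 2 + 3 * α ^ 3) * Real.sqrt (1 + 2 * α + 9 * α ^ 2)) := by
  have sqrt_eq : Real.sqrt ((1 + α) ^ 2 * (1 + 2 * α + 9 * α ^ 2) +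
      (4 * 0 / 3) * α ^ 2 * (1 + 2 * α)) = (1 + α) * Real.sqrt (1 + 2 * α + 9 * α ^ 2) := by
    rw [mul_zero, zero_div, zero_mul, zero_mul, add_zero, Real.sqrt_mul (sq_nonneg _),
      Real.sqrt_sq (by positivity)]
  have sq_sqrt_eq : Real.sqrt (1 + 2 * α + 9 * α ^ 2) ^ 2 = 1 + 2 * α + 9 * α ^ 2 :=
    Real.sq_sqrt (by positivity)
  have conjugate_mul : ((1 + 4 * α + 12 * α ^ 2 + 16 * α ^ 3 + 9 * α ^ 4) -
        (1 + 2 * α + 3 * α ^ 2) * ((1 + α) * Real.sqrt (1 + 2 * α + 9 * α ^ 2))) *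
      ((1 + 4 * α + 12 * α ^ 2 + 16 * α ^ 3 + 9 * α ^ 4) +
        (1 + 3 * α + 5 * α ^ 2 + 3 * α ^ 3) * Real.sqrt (1 + 2 * α + 9 * α ^ 2)) =
      (2 * α ^ 2 * (1 + 2 * α)) ^ 2 := by
    linear_combination -(1 + 3 * α + 5 * α ^ 2 + 3 * α ^ 3) ^ 2 * sq_sqrt_eq
  rw [l, sqrt_eq, eq_div_iff (by positivity), mul_assoc, conjugate_mul]
  field_simp
  norm_num

theorem l_zero_div_three_lt {α : ℝ} (hα : 0 < α) :
    l α 0 / 3 < 2 * α ^ 2 * (1 + 2 * α) /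
      (1 + 4 * α + 12 * α ^ 2 + 16 * α ^ 3 + 9 * α ^ 4) := by
  rw [l_zero_eq hα, div_right_comm,
    show 6 * α ^ 2 * (1 + 2 * α) / 3 = 2 * α ^ 2 * (1 + 2 * α) by ring]
  exact div_lt_div_of_pos_left (by positivity) (by positivity)
    (lt_add_of_pos_right _ (by positivity))

theorem l_div_three_lt {α γ : ℝ} (hα : 0 < α) (hα₁ : α ≠ 1) (hγ : 0 ≤ γ) :
    l α γ / 3 < 4 * α / (α - 1) ^ 2 := by
  have hsub : 0 < (α - 1) ^ 2 := sq_pos_of_ne_zero (sub_ne_zero.mpr hα₁)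
  have cross_sub_pos : 0 < 4 * α * (1 + 4 * α + 12 * α ^ 2 + 16 * α ^ 3 + 9 * α ^ 4) -
      2 * α ^ 2 * (1 + 2 * α) * (α - 1) ^ 2 := by
    calc
      0 < 2 * α * (2 + 7 * α + 24 * α ^ 2 + 35 * α ^ 3 + 16 * α ^ 4) := by positivity
      _ = _ := by ring
  calc
    l α γ / 3 ≤ l α 0 / 3 := by
      gcongr
      exact antitone_l hα hγ
    _ < 2 * α ^ 2 * (1 + 2 * α) / (1 + 4 * α + 12 * α ^ 2 + 16 * α ^ 3 + 9 * α ^ 4) :=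
      l_zero_div_three_lt hα
    _ < 4 * α / (α - 1) ^ 2 :=
      (div_lt_div_iff₀ (by positivity) hsub).mpr (sub_pos.mp cross_sub_pos)

end KNdS

theorem KNdS_rho_hat_gt_one_general {α γ : ℝ} (hα : 0 < α) (hα₁ : α ≠ 1) (hγ : 0 ≤ γ) :
    1 + KNdS.l α γ / 3 <
      1 / (Real.sin (Real.arctan (Real.sqrt α) - Real.arctan (1 / Real.sqrt α))) ^ 2 := by
  rw [KNdS.one_div_sin_sq_arctan_sqrt_sub hα hα₁]
  exact add_lt_add_right (KNdS.l_div_three_lt hα hα₁ hγ) 1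

theorem KNdS_rho_hat_gt_one (α : ℝ) (hα : 1 < α) :
    1 + KNdS.l α 0 / 3 <
      1 / (Real.sin (Real.arctan (Real.sqrt α) - Real.arctan (1 / Real.sqrt α))) ^ 2 :=
  KNdS_rho_hat_gt_one_general (zero_lt_one.trans hα) hα.ne' le_rfl
end

section
/- Let k ≥ 0. Then the function θ⋆ ↦ ∫₀^{θ⋆} dθ' / √( sin²θ⋆·(1 + k·cos²θ') − sin²θ' ) is strictly increasing on (0, π/2): if 0 < θ⋆ < θ̃⋆ < π/2 then ∫₀^{θ⋆} dθ'/√(sin²θ⋆·(1+k·cos²θ') − sin²θ') < ∫₀^{θ̃⋆} dθ'/√(sin²θ̃⋆·(1+k·cos²θ') − sin²θ'). -/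
/-! The singularity of the integrand sits at the moving endpoint `θ' = θ⋆`. With `s = sin θ⋆`, the
substitution `sin θ' = s * sin x` fixes the interval to `(0, π / 2)` and turns the integrand into
`cos x / (Δ * √(cos x ^ 2 + k * Δ ^ 2))`, where `Δ = √(1 - s ^ 2 * sin x ^ 2) = cos θ'`. Since `Δ`
strictly decreases in `s`, the new integrand strictly increases pointwise. It is bounded by
`1 / √(1 - s ^ 2)`, so both integrals converge and the pointwise inequality integrates. -/

section

open Real Set MeasureTheory

theorem intervalIntegral_lt_intervalIntegral_of_lt_on_Ioo {f g : ℝ → ℝ} {a b : ℝ} (hab : a < b)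
    (hf : IntervalIntegrable f volume a b) (hg : IntervalIntegrable g volume a b)
    (hfg : ∀ x ∈ Ioo a b, f x < g x) : ∫ x in a..b, f x < ∫ x in a..b, g x := by
  rw [← sub_pos, ← intervalIntegral.integral_sub hg hf]
  exact intervalIntegral.intervalIntegral_pos_of_pos_on (hg.sub hf)
    (fun x hx => sub_pos.2 (hfg x hx)) hab

theorem sin_mem_Ioo_zero_one {θ : ℝ} (hθ : θ ∈ Ioo 0 (π / 2)) : sin θ ∈ Ioo 0 1 := by
  have hneg : -(π / 2) ≤ θ := (neg_nonpos.2 pi_div_two_pos.le).trans hθ.1.le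
  exact ⟨sin_pos_of_pos_of_lt_pi hθ.1 (hθ.2.trans (half_lt_self pi_pos)),
    sin_pi_div_two ▸ sin_lt_sin_of_lt_of_le_pi_div_two hneg le_rfl hθ.2⟩

/-- Legendre's function `Δ` with modulus `s`, the square root that occurs in elliptic integrals.
It is the cosine of the angle whose sine is `s * sin x`. -/
noncomputable def legendreDelta (s x : ℝ) : ℝ :=
  √(1 - s ^ 2 * sin x ^ 2)

/-- The integrand of the angular integral, with `s` in place of the sine of the endpoint `θ⋆`. -/
noncomputable def angularIntegrand (k s θ : ℝ) : ℝ :=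
  1 / √(s ^ 2 * (1 + k * cos θ ^ 2) - sin θ ^ 2)

/-- The integrand of the angular integral in the variable `x` defined by `sin θ = s * sin x`, the
Jacobian included. -/
noncomputable def reducedIntegrand (k s x : ℝ) : ℝ :=
  cos x / (legendreDelta s x * √(cos x ^ 2 + k * legendreDelta s x ^ 2))

variable {k s s' x : ℝ}

theorem sqrt_one_sub_sq_le_legendreDelta (s x : ℝ) : √(1 - s ^ 2) ≤ legendreDelta s x :=
  sqrt_le_sqrt <| sub_le_sub_left (mul_le_of_le_one_right (sq_nonneg s) (sin_sq_le_one x)) 1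

theorem legendreDelta_pos (hs : s ^ 2 < 1) (x : ℝ) : 0 < legendreDelta s x :=
  (sqrt_pos.2 (sub_pos.2 hs)).trans_le (sqrt_one_sub_sq_le_legendreDelta s x)

theorem sq_legendreDelta (hs : s ^ 2 < 1) (x : ℝ) :
    legendreDelta s x ^ 2 = 1 - s ^ 2 * sin x ^ 2 :=
  sq_sqrt (sqrt_pos.1 (legendreDelta_pos hs x)).le

theorem legendreDelta_lt_legendreDelta (hss' : s ^ 2 < s' ^ 2) (hs' : s' ^ 2 < 1)
    (hx : sin x ≠ 0) : legendreDelta s' x < legendreDelta s x := by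
  refine sqrt_lt_sqrt (sqrt_pos.1 (legendreDelta_pos hs' x)).le ?_
  gcongr

theorem mul_sin_mem_Ioo (hs : s ^ 2 < 1) (x : ℝ) : s * sin x ∈ Ioo (-1) 1 := by
  rw [mem_Ioo, ← abs_lt, ← sq_lt_one_iff_abs_lt_one, mul_pow, ← sub_pos]
  exact sqrt_pos.1 (legendreDelta_pos hs x)

theorem sin_arcsin_mul_sin (hs : s ^ 2 < 1) (x : ℝ) : sin (arcsin (s * sin x)) = s * sin x :=
  sin_arcsin (mul_sin_mem_Ioo hs x).1.le (mul_sin_mem_Ioo hs x).2.le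

theorem cos_arcsin_mul_sin (s x : ℝ) : cos (arcsin (s * sin x)) = legendreDelta s x := by
  rw [cos_arcsin, mul_pow, legendreDelta]

theorem hasDerivAt_arcsin_mul_sin (hs : s ^ 2 < 1) (x : ℝ) :
    HasDerivAt (fun y => arcsin (s * sin y)) (s * cos x / legendreDelta s x) x := by
  obtain ⟨h_neg_one_lt, h_lt_one⟩ := mul_sin_mem_Ioo hs x
  rw [← cos_arcsin_mul_sin, cos_arcsin, ← one_div_mul_eq_div]
  exact (hasDerivAt_arcsin h_neg_one_lt.ne' h_lt_one.ne).comp x ((hasDerivAt_sin x).const_mul s)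

theorem integral_comp_arcsin_mul_sin {E : Type*} [NormedAddCommGroup E] [NormedSpace ℝ E]
    (f : ℝ → E) (hs₀ : 0 ≤ s) (hs₁ : s ^ 2 < 1) {a b : ℝ}
    (ha : a ∈ Icc (-(π / 2)) (π / 2)) (hb : b ∈ Icc (-(π / 2)) (π / 2)) :
    ∫ x in a..b, (s * cos x / legendreDelta s x) • f (arcsin (s * sin x)) =
      ∫ θ in arcsin (s * sin a)..arcsin (s * sin b), f θ := by
  refine intervalIntegral.integral_deriv_smul_comp_of_deriv_nonneg (g := f)
    (fun x _ => (hasDerivAt_arcsin_mul_sin hs₁ x).continuousAt.continuousWithinAt)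
    (fun x _ => hasDerivAt_arcsin_mul_sin hs₁ x) fun x hx => ?_
  have hcos : 0 ≤ cos x :=
    cos_nonneg_of_mem_Icc (uIcc_subset_Icc ha hb (Ioo_subset_Icc_self hx))
  exact div_nonneg (mul_nonneg hs₀ hcos) (legendreDelta_pos hs₁ x).le

theorem angularIntegrand_arcsin_mul_sin (k : ℝ) (hs₀ : 0 ≤ s) (hs₁ : s ^ 2 < 1) (x : ℝ) :
    angularIntegrand k s (arcsin (s * sin x)) =
      1 / (s * √(cos x ^ 2 + k * legendreDelta s x ^ 2)) := by
  have hradicand : s ^ 2 * (1 + k * legendreDelta s x ^ 2) - (s * sin x) ^ 2 =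
      s ^ 2 * (cos x ^ 2 + k * legendreDelta s x ^ 2) := by
    rw [cos_sq']
    ring
  rw [angularIntegrand, sin_arcsin_mul_sin hs₁, cos_arcsin_mul_sin, hradicand,
    sqrt_mul (sq_nonneg s), sqrt_sq hs₀]

theorem integral_angularIntegrand_eq (k : ℝ) (hs₀ : 0 < s) (hs₁ : s ^ 2 < 1) :
    ∫ θ in 0..arcsin s, angularIntegrand k s θ = ∫ x in 0..π / 2, reducedIntegrand k s x := by
  have hpi : 0 ≤ π / 2 := by positivity
  calc ∫ θ in 0..arcsin s, angularIntegrand k s θ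
      = ∫ x in 0..π / 2,
          (s * cos x / legendreDelta s x) • angularIntegrand k s (arcsin (s * sin x)) := by
        rw [integral_comp_arcsin_mul_sin _ hs₀.le hs₁ ⟨neg_nonpos.2 hpi, hpi⟩
          ⟨neg_le_self hpi, le_rfl⟩, sin_zero, mul_zero, arcsin_zero, sin_pi_div_two, mul_one]
    _ = ∫ x in 0..π / 2, reducedIntegrand k s x := by
        congr 1 with x
        rw [angularIntegrand_arcsin_mul_sin k hs₀.le hs₁, reducedIntegrand, smul_eq_mul,
          div_mul_div_comm, mul_one, mul_left_comm, mul_div_mul_left _ _ hs₀.ne']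

theorem abs_reducedIntegrand_le (hk : 0 ≤ k) (hs : s ^ 2 < 1) (x : ℝ) :
    |reducedIntegrand k s x| ≤ 1 / √(1 - s ^ 2) := by
  have hΔ := legendreDelta_pos hs x
  have hcos : |cos x| / √(cos x ^ 2 + k * legendreDelta s x ^ 2) ≤ 1 :=
    div_le_one_of_le₀ (abs_le_sqrt (le_add_of_nonneg_right (by positivity))) (sqrt_nonneg _)
  calc |reducedIntegrand k s x|
      = |cos x| / √(cos x ^ 2 + k * legendreDelta s x ^ 2) / legendreDelta s x := by
        rw [reducedIntegrand, abs_div, abs_of_nonneg (mul_nonneg hΔ.le (sqrt_nonneg _)), div_div,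
          mul_comm]
    _ ≤ 1 / √(1 - s ^ 2) :=
        div_le_div₀ zero_le_one hcos (sqrt_pos.2 (sub_pos.2 hs))
          (sqrt_one_sub_sq_le_legendreDelta s x)

theorem measurable_reducedIntegrand (k s : ℝ) : Measurable (reducedIntegrand k s) := by
  unfold reducedIntegrand legendreDelta
  fun_prop

theorem intervalIntegrable_reducedIntegrand (hk : 0 ≤ k) (hs : s ^ 2 < 1) (a b : ℝ) :
    IntervalIntegrable (reducedIntegrand k s) volume a b :=
  (intervalIntegrable_const (c := 1 / √(1 - s ^ 2))).mono_fun'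
    (measurable_reducedIntegrand k s).aestronglyMeasurable
    (ae_of_all _ (abs_reducedIntegrand_le hk hs))

theorem reducedIntegrand_lt_reducedIntegrand (hk : 0 ≤ k) (hss' : s ^ 2 < s' ^ 2)
    (hs' : s' ^ 2 < 1) (hsin : sin x ≠ 0) (hcos : 0 < cos x) :
    reducedIntegrand k s x < reducedIntegrand k s' x := by
  have hΔ' := legendreDelta_pos hs' x
  have hΔ := legendreDelta_lt_legendreDelta hss' hs' hsin
  have hsqrt : √(cos x ^ 2 + k * legendreDelta s' x ^ 2) ≤
      √(cos x ^ 2 + k * legendreDelta s x ^ 2) := by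
    gcongr
  have hsqrt_pos : 0 < √(cos x ^ 2 + k * legendreDelta s' x ^ 2) := by positivity
  exact div_lt_div_of_pos_left hcos (mul_pos hΔ' hsqrt_pos)
    (mul_lt_mul hΔ hsqrt hsqrt_pos (hΔ'.trans hΔ).le)

theorem strictMonoOn_integral_reducedIntegrand (hk : 0 ≤ k) :
    StrictMonoOn (fun s => ∫ x in 0..π / 2, reducedIntegrand k s x) (Ico 0 1) := by
  intro s hs s' hs' hss'
  have hsq : s ^ 2 < s' ^ 2 := pow_lt_pow_left₀ hss' hs.1 two_ne_zero
  have hsq' : s' ^ 2 < 1 := pow_lt_one₀ hs'.1 hs'.2 two_ne_zero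
  refine intervalIntegral_lt_intervalIntegral_of_lt_on_Ioo pi_div_two_pos
    (intervalIntegrable_reducedIntegrand hk (hsq.trans hsq') _ _)
    (intervalIntegrable_reducedIntegrand hk hsq' _ _) fun x hx => ?_
  have hcos : 0 < cos x := cos_pos_of_mem_Ioo ⟨(neg_neg_of_pos pi_div_two_pos).trans hx.1, hx.2⟩
  exact reducedIntegrand_lt_reducedIntegrand hk hsq hsq' (sin_mem_Ioo_zero_one hx).1.ne' hcos

theorem integral_angularIntegrand_sin_eq (k : ℝ) {θ : ℝ} (hθ : θ ∈ Ioo 0 (π / 2)) :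
    ∫ θ' in 0..θ, angularIntegrand k (sin θ) θ' =
      ∫ x in 0..π / 2, reducedIntegrand k (sin θ) x := by
  obtain ⟨hsin_pos, hsin_lt_one⟩ := sin_mem_Ioo_zero_one hθ
  rw [← integral_angularIntegrand_eq k hsin_pos (pow_lt_one₀ hsin_pos.le hsin_lt_one two_ne_zero),
    arcsin_sin ((neg_nonpos.2 pi_div_two_pos.le).trans hθ.1.le) hθ.2.le]

end

open intervalIntegral in
theorem angular_integral_strictMono (k : ℝ) (hk : 0 ≤ k)
    (θs θs' : ℝ) (h0 : 0 < θs) (h1 : θs < θs') (h2 : θs' < Real.pi / 2) :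
    (∫ θ' in (0:ℝ)..θs,
        1 / Real.sqrt (Real.sin θs ^ 2 * (1 + k * Real.cos θ' ^ 2) - Real.sin θ' ^ 2)) <
      ∫ θ' in (0:ℝ)..θs',
        1 / Real.sqrt (Real.sin θs' ^ 2 * (1 + k * Real.cos θ' ^ 2) - Real.sin θ' ^ 2) := by
  have hθs : θs ∈ Set.Ioo 0 (Real.pi / 2) := ⟨h0, h1.trans h2⟩
  have hθs' : θs' ∈ Set.Ioo 0 (Real.pi / 2) := ⟨h0.trans h1, h2⟩
  have hsin : Real.sin θs < Real.sin θs' :=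
    Real.sin_lt_sin_of_lt_of_le_pi_div_two (by linarith) h2.le h1
  calc ∫ θ' in 0..θs, angularIntegrand k (Real.sin θs) θ'
      = ∫ x in 0..Real.pi / 2, reducedIntegrand k (Real.sin θs) x :=
        integral_angularIntegrand_sin_eq k hθs
    _ < ∫ x in 0..Real.pi / 2, reducedIntegrand k (Real.sin θs') x :=
        strictMonoOn_integral_reducedIntegrand hk
          (Set.Ioo_subset_Ico_self (sin_mem_Ioo_zero_one hθs))
          (Set.Ioo_subset_Ico_self (sin_mem_Ioo_zero_one hθs')) hsin
    _ = ∫ θ' in 0..θs', angularIntegrand k (Real.sin θs') θ' :=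
        (integral_angularIntegrand_sin_eq k hθs').symm
end

section
/- Let k ≥ 0 and let 0 ≤ θ < θ⋆ < π/2. Then ∫_θ^{θ⋆} dθ' / √( sin²θ⋆·(1 + k·cos²θ') − sin²θ' ) ≥ arcsin( 1/√(1+k) ) − arcsin( sin θ / ( √(1+k)·sin θ⋆ ) ). -/
/-!
On `(θ, θ⋆)` the integrand dominates the derivative
`cos t / √((1 + k) sin² θ⋆ - sin² t)` of `t ↦ arcsin (sin t / (√(1 + k) sin θ⋆))`, since `cos t ≤ 1`
and the radicand of the integrand is at most `(1 + k) sin² θ⋆ - sin² t`. The integrand may be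
singular at `θ⋆`, but its radicand is a positive multiple of `c - sin² t` with `c < 1`, so `cos t`
stays away from `0` and the integrand is at most a multiple of the derivative of
`t ↦ arcsin (sin t / √c)`, which is integrable because it is nonnegative.
-/

open Real Set MeasureTheory

section ArcsinSinDivSqrt

variable {a b c t : ℝ}

lemma hasDerivAt_arcsin_sin_div_sqrt (ht : sin t ^ 2 < c) :
    HasDerivAt (fun x => arcsin (sin x / √c)) (cos t / √(c - sin t ^ 2)) t := by
  have hc : 0 < c := (sq_nonneg _).trans_lt ht
  have hlt : |sin t / √c| < 1 := by
    rw [abs_div, abs_of_pos (sqrt_pos.2 hc), div_lt_one (sqrt_pos.2 hc)]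
    exact lt_sqrt_of_sq_lt (by rwa [sq_abs])
  have hsqrt : √(c - sin t ^ 2) = √(1 - (sin t / √c) ^ 2) * √c := by
    rw [← sqrt_mul' _ hc.le, div_pow, sq_sqrt hc.le, sub_mul, one_mul, div_mul_cancel₀ _ hc.ne']
  refine ((hasDerivAt_arcsin (abs_lt.1 hlt).1.ne' (abs_lt.1 hlt).2.ne).comp t
    ((hasDerivAt_sin t).div_const √c)).congr_deriv ?_
  rw [hsqrt, div_mul_div_comm, one_mul]

lemma continuous_arcsin_sin_div (m : ℝ) : Continuous fun t => arcsin (sin t / m) :=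
  continuous_arcsin.comp (continuous_sin.div_const m)

lemma integrableOn_cos_div_sqrt_sub_sin_sq (ha : -(π / 2) ≤ a) (hb : b ≤ π / 2)
    (hc : ∀ t ∈ Ioo a b, sin t ^ 2 < c) :
    IntegrableOn (fun t => cos t / √(c - sin t ^ 2)) (Ioo a b) := by
  refine (intervalIntegral.integrableOn_deriv_of_nonneg
    (continuous_arcsin_sin_div √c).continuousOn
    (fun t ht => hasDerivAt_arcsin_sin_div_sqrt (hc t ht)) fun t ht => ?_).mono_set
    Ioo_subset_Ioc_self
  exact div_nonneg
    (cos_nonneg_of_mem_Icc ⟨ha.trans ht.1.le, ht.2.le.trans hb⟩) (sqrt_nonneg _)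

lemma integrableOn_one_div_sqrt_sub_sin_sq (hc1 : c < 1) (ha : -(π / 2) ≤ a) (hb : b ≤ π / 2)
    (hc : ∀ t ∈ Ioo a b, sin t ^ 2 < c) :
    IntegrableOn (fun t => 1 / √(c - sin t ^ 2)) (Ioo a b) := by
  have hpos : 0 < √(1 - c) := sqrt_pos.2 (sub_pos.2 hc1)
  refine ((integrableOn_cos_div_sqrt_sub_sin_sq ha hb hc).const_mul (1 / √(1 - c))).mono'
    (Measurable.aestronglyMeasurable (by fun_prop))
    ((ae_restrict_iff' measurableSet_Ioo).2 (.of_forall fun t ht => ?_))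
  have hcos : √(1 - c) ≤ cos t := by
    rw [cos_eq_sqrt_one_sub_sin_sq (ha.trans ht.1.le) (ht.2.le.trans hb)]
    exact sqrt_le_sqrt (by linarith [hc t ht])
  calc ‖1 / √(c - sin t ^ 2)‖ = 1 / √(c - sin t ^ 2) := norm_of_nonneg (by positivity)
    _ ≤ cos t / √(1 - c) / √(c - sin t ^ 2) := by gcongr; exact (one_le_div hpos).2 hcos
    _ = 1 / √(1 - c) * (cos t / √(c - sin t ^ 2)) := by ring

end ArcsinSinDivSqrt

/-- The radicand `sin² θ⋆ · Δ_t - sin² t` of the angular integral, where `s` stands for `sin θ⋆` and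
`k` for `(Λ/3) a²`. -/
noncomputable def angularRadicand (k s t : ℝ) : ℝ :=
  s ^ 2 * (1 + k * cos t ^ 2) - sin t ^ 2

section AngularRadicand

variable {k s a b t : ℝ}

lemma angularRadicand_eq_mul (hks : 1 + k * s ^ 2 ≠ 0) (t : ℝ) :
    angularRadicand k s t =
      (1 + k * s ^ 2) * ((1 + k) * s ^ 2 / (1 + k * s ^ 2) - sin t ^ 2) := by
  rw [angularRadicand, mul_sub, mul_div_cancel₀ _ hks, cos_sq']
  ring

lemma angularRadicand_le (hk : 0 ≤ k) (s t : ℝ) :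
    angularRadicand k s t ≤ (1 + k) * s ^ 2 - sin t ^ 2 := by
  rw [angularRadicand, mul_comm (1 + k)]
  gcongr
  exact mul_le_of_le_one_right hk (cos_sq_le_one t)

lemma angularRadicand_sin_pos {θ : ℝ} (hk : 0 ≤ k) (hθ : θ ≤ π / 2) (ht : |t| < θ) :
    0 < angularRadicand k (sin θ) t := by
  obtain ⟨hlo, hhi⟩ := abs_lt.1 ht
  have hsin : sin t ^ 2 < sin θ ^ 2 := by
    refine sq_lt_sq' ?_ (sin_lt_sin_of_lt_of_le_pi_div_two (by linarith) hθ hhi)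
    rw [← sin_neg]
    exact sin_lt_sin_of_lt_of_le_pi_div_two (by linarith) (by linarith) hlo
  exact sub_pos.2 (hsin.trans_le
    (le_mul_of_one_le_right (sq_nonneg _) (le_add_of_nonneg_right (by positivity))))

lemma cos_div_sqrt_le_one_div_sqrt_angularRadicand (hk : 0 ≤ k) (ht : 0 < angularRadicand k s t) :
    cos t / √((1 + k) * s ^ 2 - sin t ^ 2) ≤ 1 / √(angularRadicand k s t) :=
  div_le_div₀ zero_le_one (cos_le_one t) (sqrt_pos.2 ht) (sqrt_le_sqrt (angularRadicand_le hk s t))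

lemma integrableOn_one_div_sqrt_angularRadicand (hks : 0 < 1 + k * s ^ 2) (hs : s ^ 2 < 1)
    (ha : -(π / 2) ≤ a) (hb : b ≤ π / 2) (hpos : ∀ t ∈ Ioo a b, 0 < angularRadicand k s t) :
    IntegrableOn (fun t => 1 / √(angularRadicand k s t)) (Ioo a b) := by
  have hlt_one : (1 + k) * s ^ 2 / (1 + k * s ^ 2) < 1 := by
    rw [div_lt_one hks]
    linarith
  have hsin : ∀ t ∈ Ioo a b, sin t ^ 2 < (1 + k) * s ^ 2 / (1 + k * s ^ 2) := fun t ht => by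
    have := hpos t ht
    rw [angularRadicand_eq_mul hks.ne'] at this
    exact sub_pos.1 (pos_of_mul_pos_right this hks.le)
  simp only [angularRadicand_eq_mul hks.ne', sqrt_mul hks.le, one_div, mul_inv]
  simpa only [IntegrableOn, one_div] using
    (integrableOn_one_div_sqrt_sub_sin_sq hlt_one ha hb hsin).const_mul (√(1 + k * s ^ 2))⁻¹

theorem angular_integral_lower_bound_general (hk : 0 ≤ k) (hs0 : 0 ≤ s) (hs1 : s < 1)
    (hab : a ≤ b) (ha : -(π / 2) ≤ a) (hb : b ≤ π / 2)
    (hpos : ∀ t ∈ Ioo a b, 0 < angularRadicand k s t) :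
    arcsin (sin b / (√(1 + k) * s)) - arcsin (sin a / (√(1 + k) * s)) ≤
      ∫ t in a..b, 1 / √(angularRadicand k s t) := by
  have hsqrt : √(1 + k) * s = √((1 + k) * s ^ 2) := by rw [sqrt_mul (by positivity), sqrt_sq hs0]
  rw [hsqrt]
  refine intervalIntegral.sub_le_integral_of_hasDeriv_right_of_le hab
    (continuous_arcsin_sin_div _).continuousOn (fun t ht => ?_) ?_
    fun t ht => cos_div_sqrt_le_one_div_sqrt_angularRadicand hk (hpos t ht)
  · exact (hasDerivAt_arcsin_sin_div_sqrt
      (sub_pos.1 ((hpos t ht).trans_le (angularRadicand_le hk s t)))).hasDerivWithinAt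
  · rw [integrableOn_Icc_iff_integrableOn_Ioo]
    exact integrableOn_one_div_sqrt_angularRadicand (by positivity)
      ((sq_lt_one_iff₀ hs0).2 hs1) ha hb hpos

end AngularRadicand

open intervalIntegral in
theorem angular_integral_lower_bound (k : ℝ) (hk : 0 ≤ k)
    (θ θs : ℝ) (h0 : 0 ≤ θ) (h1 : θ < θs) (h2 : θs < Real.pi / 2) :
    (∫ θ' in θ..θs,
        1 / Real.sqrt (Real.sin θs ^ 2 * (1 + k * Real.cos θ' ^ 2) - Real.sin θ' ^ 2)) ≥
      Real.arcsin (1 / Real.sqrt (1 + k)) -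
        Real.arcsin (Real.sin θ / (Real.sqrt (1 + k) * Real.sin θs)) := by
  have hs0 : 0 < sin θs := sin_pos_of_pos_of_lt_pi (by linarith) (by linarith)
  have hs1 : sin θs < 1 := by
    simpa using sin_lt_sin_of_lt_of_le_pi_div_two (by linarith) le_rfl h2
  rw [one_div √(1 + k), ← div_mul_cancel_right₀ hs0.ne']
  exact angular_integral_lower_bound_general hk hs0.le hs1 h1.le (by linarith) h2.le
    fun t ht => angularRadicand_sin_pos hk h2.le (abs_lt.2 ⟨by linarith [ht.1], ht.2⟩)
end
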